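/- (General sequential editing update with conflict resolution.) Let W ∈ ℝ^{d_o×d_i}, and let K_{A/P}, K_{P/A}, K_{AP} be key matrices with corresponding value matrices V_{A/P}, V_{P/A}, V_{AP} of matching column counts. Define the concatenations K_t := [K_{A/P} | K_{AP}], V_t := [V_{A/P} | V_{AP}], K_P := [K_{P/A} | K_{AP}], V_P := [V_{P/A} | V_{AP}]. Assume (i) (V_P − W K_P) K_Pᵀ = 0 (the pre-step weights exactly encode the preserved knowledge), and (ii) the matrix G := K_{A/P}K_{A/P}ᵀ + K_{P/A}K_{P/A}ᵀ + K_{AP}K_{AP}ᵀ is invertible. Then the unique minimizer over Δ ∈ ℝ^{d_o×d_i} of the objective ‖(W + Δ)K_{A/P} − V_{A/P}‖_F² + ‖(W + Δ)K_{P/A} − V_{P/A}‖_F² + ‖(W + Δ)K_{AP} − V_{AP}‖_F² equals ((V_t − W K_t)K_tᵀ − (V_{AP} − W K_{AP})K_{AP}ᵀ) (K_P K_Pᵀ + K_t K_tᵀ − K_{AP}K_{AP}ᵀ)⁻¹. -/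

import Mathlib

open Matrix BigOperators

noncomputable section

/-- Squared Frobenius norm of a real matrix. -/
def frobSq {n m : Type*} [Fintype n] [Fintype m] (A : Matrix n m ℝ) : ℝ :=
  ∑ i, ∑ j, (A i j) ^ 2

theorem frobSq_add' {n m p : ℕ} (D : Matrix (Fin n) (Fin p) ℝ) (K : Matrix (Fin p) (Fin m) ℝ)
    (R : Matrix (Fin n) (Fin m) ℝ) :
    frobSq (R + D * K) = frobSq R + 2 * trace (R * Kᵀ * Dᵀ) + frobSq (D * K) := by
  have h : trace (R * Kᵀ * Dᵀ) = ∑ i, ∑ j, R i j * (D * K) i j := by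
    rw [Matrix.mul_assoc, ← Matrix.transpose_mul]
    generalize D * K = E
    simp only [Matrix.trace, Matrix.diag_apply, Matrix.mul_apply, Matrix.transpose_apply]
  rw [h]
  simp only [frobSq, Finset.mul_sum, ← Finset.sum_add_distrib, Matrix.add_apply]
  refine Finset.sum_congr rfl fun i _ => Finset.sum_congr rfl fun j _ => ?_
  ring

theorem frobSq_nonneg' {n m : ℕ} (A : Matrix (Fin n) (Fin m) ℝ) : 0 ≤ frobSq A :=
  Finset.sum_nonneg fun _ _ => Finset.sum_nonneg fun _ _ => sq_nonneg _

theorem frobSq_eq_zero' {n m : ℕ} (A : Matrix (Fin n) (Fin m) ℝ) (h : frobSq A ≤ 0) : A = 0 := by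
  have h0 : frobSq A = 0 := le_antisymm h (frobSq_nonneg' A)
  unfold frobSq at h0
  ext i j
  have h1 := (Finset.sum_eq_zero_iff_of_nonneg
    (fun i _ => Finset.sum_nonneg fun j _ => sq_nonneg (A i j))).mp h0 i (Finset.mem_univ _)
  have h2 := (Finset.sum_eq_zero_iff_of_nonneg
    (fun j _ => sq_nonneg (A i j))).mp h1 j (Finset.mem_univ _)
  simpa using h2

theorem conflict_resolution_sequential_update
    {dOut dIn a b c : ℕ}
    (W : Matrix (Fin dOut) (Fin dIn) ℝ)
    (KAP' : Matrix (Fin dIn) (Fin a) ℝ) (VAP' : Matrix (Fin dOut) (Fin a) ℝ)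
    (KPA' : Matrix (Fin dIn) (Fin b) ℝ) (VPA' : Matrix (Fin dOut) (Fin b) ℝ)
    (KAP : Matrix (Fin dIn) (Fin c) ℝ) (VAP : Matrix (Fin dOut) (Fin c) ℝ) :
    let Kt := Matrix.fromCols KAP' KAP
    let Vt := Matrix.fromCols VAP' VAP
    let KP := Matrix.fromCols KPA' KAP
    let VP := Matrix.fromCols VPA' VAP
    ∀ _hpre : (VP - W * KP) * KPᵀ = 0,
    ∀ _hG : Invertible (KAP' * KAP'ᵀ + KPA' * KPA'ᵀ + KAP * KAPᵀ),
    let f : Matrix (Fin dOut) (Fin dIn) ℝ → ℝ := fun Δ =>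
      frobSq ((W + Δ) * KAP' - VAP') + frobSq ((W + Δ) * KPA' - VPA') +
        frobSq ((W + Δ) * KAP - VAP)
    let Δstar : Matrix (Fin dOut) (Fin dIn) ℝ :=
      ((Vt - W * Kt) * Ktᵀ - (VAP - W * KAP) * KAPᵀ) *
        (KP * KPᵀ + Kt * Ktᵀ - KAP * KAPᵀ)⁻¹
    (∀ Δ, f Δstar ≤ f Δ) ∧ (∀ Δ, f Δ ≤ f Δstar → Δ = Δstar) := by
  intro Kt Vt KP VP hpre hG f Δstar
  have hpre' : (VPA' - W * KPA') * KPA'ᵀ + (VAP - W * KAP) * KAPᵀ = 0 := by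
    have h := hpre
    simp only [VP, KP, Matrix.sub_mul, Matrix.mul_assoc, Matrix.transpose_fromCols,
      Matrix.fromCols_mul_fromRows, Matrix.mul_add] at h
    simp only [Matrix.sub_mul, Matrix.mul_assoc]
    rw [← h]; abel
  have hGe : KP * KPᵀ + Kt * Ktᵀ - KAP * KAPᵀ
      = KAP' * KAP'ᵀ + KPA' * KPA'ᵀ + KAP * KAPᵀ := by
    simp only [KP, Kt, Matrix.transpose_fromCols, Matrix.fromCols_mul_fromRows]
    abel
  have hB : (Vt - W * Kt) * Ktᵀ - (VAP - W * KAP) * KAPᵀ = (VAP' - W * KAP') * KAP'ᵀ := by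
    simp only [Vt, Kt, Matrix.sub_mul, Matrix.mul_assoc, Matrix.transpose_fromCols,
      Matrix.fromCols_mul_fromRows, Matrix.mul_add]
    abel
  have hS : Δstar * (KAP' * KAP'ᵀ + KPA' * KPA'ᵀ + KAP * KAPᵀ)
      = (VAP' - W * KAP') * KAP'ᵀ := by
    simp only [Δstar]
    rw [hGe, hB, Matrix.mul_assoc, Matrix.inv_mul_of_invertible, Matrix.mul_one]
  have hN : ((W + Δstar) * KAP' - VAP') * KAP'ᵀ + ((W + Δstar) * KPA' - VPA') * KPA'ᵀ
      + ((W + Δstar) * KAP - VAP) * KAPᵀ = 0 := by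
    have e : ((W + Δstar) * KAP' - VAP') * KAP'ᵀ + ((W + Δstar) * KPA' - VPA') * KPA'ᵀ
      + ((W + Δstar) * KAP - VAP) * KAPᵀ
      = (Δstar * (KAP' * KAP'ᵀ + KPA' * KPA'ᵀ + KAP * KAPᵀ) - (VAP' - W * KAP') * KAP'ᵀ)
        - ((VPA' - W * KPA') * KPA'ᵀ + (VAP - W * KAP) * KAPᵀ) := by
      simp only [Matrix.sub_mul, Matrix.add_mul, Matrix.mul_add, Matrix.mul_assoc]
      abel
    rw [e, hS, hpre']; simp
  clear_value Δstar
  have key : ∀ Δ, f Δ = f Δstar + (frobSq ((Δ - Δstar) * KAP') + frobSq ((Δ - Δstar) * KPA')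
      + frobSq ((Δ - Δstar) * KAP)) := by
    intro Δ
    have d : ∀ {m : ℕ} (K : Matrix (Fin dIn) (Fin m) ℝ) (V : Matrix (Fin dOut) (Fin m) ℝ),
        (W + Δ) * K - V = ((W + Δstar) * K - V) + (Δ - Δstar) * K := by
      intro m K V
      simp only [Matrix.sub_mul, Matrix.add_mul]
      abel
    have t := congrArg (fun M => trace (M * (Δ - Δstar)ᵀ)) hN
    simp only [Matrix.add_mul _ _ (Δ - Δstar)ᵀ, Matrix.trace_add, Matrix.zero_mul,
      Matrix.trace_zero] at t
    simp only [f]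
    rw [d KAP' VAP', d KPA' VPA', d KAP VAP, frobSq_add', frobSq_add', frobSq_add']
    linarith
  refine ⟨fun Δ => ?_, fun Δ h => ?_⟩
  · rw [key Δ]
    linarith [frobSq_nonneg' ((Δ - Δstar) * KAP'), frobSq_nonneg' ((Δ - Δstar) * KPA'),
      frobSq_nonneg' ((Δ - Δstar) * KAP)]
  · rw [key Δ] at h
    have n1 := frobSq_nonneg' ((Δ - Δstar) * KAP')
    have n2 := frobSq_nonneg' ((Δ - Δstar) * KPA')
    have n3 := frobSq_nonneg' ((Δ - Δstar) * KAP)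
    have z1 := frobSq_eq_zero' ((Δ - Δstar) * KAP') (by linarith)
    have z2 := frobSq_eq_zero' ((Δ - Δstar) * KPA') (by linarith)
    have z3 := frobSq_eq_zero' ((Δ - Δstar) * KAP) (by linarith)
    have z : (Δ - Δstar) * (KAP' * KAP'ᵀ + KPA' * KPA'ᵀ + KAP * KAPᵀ) = 0 := by
      simp only [Matrix.mul_add, ← Matrix.mul_assoc, z1, z2, z3, Matrix.zero_mul, add_zero]
    have z' := congrArg (fun M => M * ⅟(KAP' * KAP'ᵀ + KPA' * KPA'ᵀ + KAP * KAPᵀ)) z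
    simp only [Matrix.mul_assoc, mul_invOf_self, Matrix.mul_one, Matrix.zero_mul] at z'
    exact sub_eq_zero.mp z'
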